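/- Let 𝒯 be a triangulated category with countable direct sums and 𝔦 a homological ideal with enough projective objects that is compatible with countable direct sums. Then the pair (⟨Proj_𝔦⟩, 𝒩_𝔦) is complementary: 𝒯_*(P, N) = 0 for all P in the localising subcategory generated by the 𝔦-projective objects and all 𝔦-contractible N, and every object A fits into an exact triangle Ã → A → N → Ã[1] with Ã ∈ ⟨Proj_𝔦⟩ and N ∈ 𝒩_𝔦. -/

import Mathlib

open CategoryTheory Limits Pretriangulated

universe v u v' u'

/-- An ideal in a preadditive category. -/
structure CatIdeal (C : Type u) [Category.{v} C] [Preadditive C] where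
  carrier : ∀ A B : C, AddSubgroup (A ⟶ B)
  comp_mem_left : ∀ {A B X : C} (f : A ⟶ B) (g : B ⟶ X),
    f ∈ carrier A B → f ≫ g ∈ carrier A X
  comp_mem_right : ∀ {A B X : C} (h : X ⟶ A) (f : A ⟶ B),
    f ∈ carrier A B → h ≫ f ∈ carrier X B

/-- `P` is `𝔦`-projective iff every morphism of `𝔦` out of `P` vanishes. -/
def IsProjI {C : Type u} [Category.{v} C] [Preadditive C]
    (I : CatIdeal C) (P : C) : Prop :=
  ∀ (B : C) (g : P ⟶ B), g ∈ I.carrier P B → g = 0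

/-- A class of objects is localising if it is closed under isomorphisms, shifts,
exact triangles and countable direct sums. -/
def IsLocalising (C : Type u) [Category.{v} C] [Preadditive C] [HasZeroObject C]
    [HasShift C ℤ] [∀ n : ℤ, (shiftFunctor C n).Additive] [Pretriangulated C]
    [HasCountableCoproducts C] (T : Set C) : Prop :=
  (∀ {X Y : C}, (X ≅ Y) → X ∈ T → Y ∈ T) ∧
  (∀ X ∈ T, ∀ n : ℤ, X⟦n⟧ ∈ T) ∧
  (∀ T' : Triangle C, T' ∈ (distTriang C) → T'.obj₁ ∈ T → T'.obj₂ ∈ T → T'.obj₃ ∈ T) ∧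
  (∀ (ι : Type) [Countable ι] (X : ι → C), (∀ i, X i ∈ T) → (∐ X) ∈ T)

/-- The localising subcategory generated by a class of objects. -/
def localisingClosure (C : Type u) [Category.{v} C] [Preadditive C] [HasZeroObject C]
    [HasShift C ℤ] [∀ n : ℤ, (shiftFunctor C n).Additive] [Pretriangulated C]
    [HasCountableCoproducts C] (S : Set C) : Set C :=
  ⋂₀ {T : Set C | S ⊆ T ∧ IsLocalising C T}


section Helpers

variable {C : Type u} [Category.{v} C] [Preadditive C] [HasZeroObject C] [HasShift C ℤ]
    [∀ n : ℤ, (shiftFunctor C n).Additive] [Pretriangulated C]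

lemma tri_yo2 {X Y Z W : C} {f : X ⟶ Y} {g : Y ⟶ Z} {h : Z ⟶ X⟦(1 : ℤ)⟧}
    (hT : Triangle.mk f g h ∈ distTriang C) (u : Y ⟶ W) (hu : f ≫ u = 0) :
    ∃ t : Z ⟶ W, u = g ≫ t :=
  Triangle.yoneda_exact₂ _ hT u hu

lemma tri_co2 {X Y Z W : C} {f : X ⟶ Y} {g : Y ⟶ Z} {h : Z ⟶ X⟦(1 : ℤ)⟧}
    (hT : Triangle.mk f g h ∈ distTriang C) (u : W ⟶ Y) (hu : u ≫ g = 0) :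
    ∃ t : W ⟶ X, u = t ≫ f :=
  Triangle.coyoneda_exact₂ _ hT u hu

lemma tri_co3 {X Y Z W : C} {f : X ⟶ Y} {g : Y ⟶ Z} {h : Z ⟶ X⟦(1 : ℤ)⟧}
    (hT : Triangle.mk f g h ∈ distTriang C) (u : W ⟶ Z) (hu : u ≫ h = 0) :
    ∃ t : W ⟶ Y, u = t ≫ g :=
  Triangle.coyoneda_exact₃ _ hT u hu

/-- Unshifting a morphism out of a shift. -/
lemma eq_zero_of_unshift {P B : C} (n : ℤ) (g : P⟦n⟧ ⟶ B)
    (h : (shiftFunctorCompIsoId C n (-n) (by lia)).inv.app P ≫ g⟦-n⟧' = 0) : g = 0 := by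
  have h2 : g⟦-n⟧' = 0 := by
    rw [← cancel_epi ((shiftFunctorCompIsoId C n (-n) (by lia)).inv.app P), h, comp_zero]
  apply (shiftFunctor C (-n)).map_injective
  rw [h2, Functor.map_zero]

/-- Every projective test map lifts along `f`. -/
def LiftsI (I : CatIdeal C) {X Y : C} (f : X ⟶ Y) : Prop :=
  ∀ (P : C), IsProjI I P → ∀ x : P ⟶ Y, ∃ x' : P ⟶ X, x' ≫ f = x

/-- `s` kills every projective test map killed by `f`. -/
def KillsI (I : CatIdeal C) {X Y W : C} (f : X ⟶ Y) (s : X ⟶ W) : Prop :=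
  ∀ (P : C), IsProjI I P → ∀ x : P ⟶ X, x ≫ f = 0 → x ≫ s = 0

lemma isProjI_shift (I : CatIdeal C)
    (hshift : ∀ {X Y : C} (f : X ⟶ Y) (n : ℤ),
      f ∈ I.carrier X Y → (shiftFunctor C n).map f ∈ I.carrier (X⟦n⟧) (Y⟦n⟧))
    {P : C} (hP : IsProjI I P) (n : ℤ) : IsProjI I (P⟦n⟧) := by
  intro B g hg
  apply eq_zero_of_unshift
  exact hP _ _ (I.comp_mem_right _ _ (hshift _ _ hg))

/-- Shifting preserves injectivity on projective tests. -/
lemma mono_shift (I : CatIdeal C)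
    (hshift : ∀ {X Y : C} (f : X ⟶ Y) (n : ℤ),
      f ∈ I.carrier X Y → (shiftFunctor C n).map f ∈ I.carrier (X⟦n⟧) (Y⟦n⟧))
    {X Y : C} (f : X ⟶ Y)
    (hf : ∀ (P : C), IsProjI I P → ∀ x : P ⟶ X, x ≫ f = 0 → x = 0)
    (P : C) (hP : IsProjI I P) (x : P ⟶ X⟦(1 : ℤ)⟧) (hx : x ≫ f⟦(1 : ℤ)⟧' = 0) : x = 0 := by
  let e := shiftFunctorCompIsoId C (1 : ℤ) (-1) (by lia)
  have h1 : x⟦(-1 : ℤ)⟧' ≫ e.hom.app X = 0 := by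
    apply hf _ (isProjI_shift I hshift hP (-1))
    have h2 := e.hom.naturality f
    simp only [Functor.comp_map, Functor.id_map] at h2
    rw [Category.assoc, ← h2, ← Category.assoc, ← Functor.map_comp, hx, Functor.map_zero,
      zero_comp]
  have h3 : x⟦(-1 : ℤ)⟧' = 0 := by
    rw [← cancel_mono (e.hom.app X), h1, zero_comp]
  apply (shiftFunctor C (-1 : ℤ)).map_injective
  rw [h3, Functor.map_zero]

lemma liftsI_of_cone (I : CatIdeal C) {X Y Z : C} {f : X ⟶ Y} {g : Y ⟶ Z} {h : Z ⟶ X⟦(1 : ℤ)⟧}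
    (hT : Triangle.mk f g h ∈ distTriang C) (hg : g ∈ I.carrier Y Z) : LiftsI I f := by
  intro P hP x
  have h0 : x ≫ g = 0 := hP _ _ (I.comp_mem_right _ _ hg)
  obtain ⟨x', hx'⟩ := tri_co2 hT x h0
  exact ⟨x', hx'.symm⟩

/-- Having enough test objects. -/
def EnoughI (I : CatIdeal C) : Prop :=
  (∀ X : C, ∃ (Q : C) (q : Q ⟶ X), IsProjI I Q ∧ LiftsI I q) ∧
  (∀ (X Y : C) (f : X ⟶ Y), (∀ (P : C), IsProjI I P → ∀ x : P ⟶ X, x ≫ f = 0) →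
    f ∈ I.carrier X Y)

variable [HasCountableCoproducts C]

lemma isLocalising_closure (S : Set C) : IsLocalising C (localisingClosure C S) := by
  refine ⟨?_, ?_, ?_, ?_⟩
  · intro X Y e hX T hT
    exact hT.2.1 e (hX T hT)
  · intro X hX n T hT
    exact hT.2.2.1 X (hX T hT) n
  · intro T' h h1 h2 T hT
    exact hT.2.2.2.1 T' h (h1 T hT) (h2 T hT)
  · intro ι _ X hX T hT
    exact hT.2.2.2.2 ι X (fun i => hX i T hT)

/-- Coproducts of maps which lift projectives lift projectives. -/
lemma liftsI_sigma (I : CatIdeal C) (hE : EnoughI I)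
    (hsum : ∀ (ι : Type) [Countable ι] (X : ι → C) (B : C) (f : (∐ X) ⟶ B),
      ((∀ i, Sigma.ι X i ≫ f ∈ I.carrier (X i) B) ↔ f ∈ I.carrier (∐ X) B))
    (X Y : ℕ → C) (f : ∀ n, X n ⟶ Y n) (hf : ∀ n, LiftsI I (f n)) :
    LiftsI I (Limits.Sigma.map f) := by
  obtain ⟨E, g, h, hT⟩ := distinguished_cocone_triangle (Limits.Sigma.map f)
  refine liftsI_of_cone I hT ((hsum ℕ Y E g).1 fun n => ?_)
  obtain ⟨Z, gn, hn, hTn⟩ := distinguished_cocone_triangle (f n)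
  have hg : gn ∈ I.carrier _ _ := by
    apply hE.2
    intro P hP x
    obtain ⟨x', rfl⟩ := hf n P hP x
    have h0 : f n ≫ gn = 0 := comp_distTriang_mor_zero₁₂ _ hTn
    rw [Category.assoc, h0, comp_zero]
  obtain ⟨c, hc, -⟩ := complete_distinguished_triangle_morphism _ _ hTn hT
    (Sigma.ι X n) (Sigma.ι Y n)
    (show f n ≫ Sigma.ι Y n = Sigma.ι X n ≫ Limits.Sigma.map f by simp)
  have hc' : gn ≫ c = Sigma.ι Y n ≫ g := hc
  rw [← hc']
  exact I.comp_mem_left _ _ hg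

lemma killsI_sigma (I : CatIdeal C) (hE : EnoughI I)
    (hsum : ∀ (ι : Type) [Countable ι] (X : ι → C) (B : C) (f : (∐ X) ⟶ B),
      ((∀ i, Sigma.ι X i ≫ f ∈ I.carrier (X i) B) ↔ f ∈ I.carrier (∐ X) B))
    (X Y : ℕ → C) (f : ∀ n, X n ⟶ Y n) (W : C) (s : ∐ X ⟶ W)
    (hf : ∀ n, KillsI I (f n) (Sigma.ι X n ≫ s)) :
    KillsI I (Limits.Sigma.map f) s := by
  intro P hP u hu
  have H : ∀ n, ∃ (K : C) (k : K ⟶ X n) (d : Y n ⟶ K⟦(1 : ℤ)⟧),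
      Triangle.mk k (f n) d ∈ distTriang C := fun n => by
    obtain ⟨K, k, d, h⟩ := distinguished_cocone_triangle₁ (f n)
    exact ⟨K, k, d, h⟩
  choose K k d hT using H
  obtain ⟨E, g, h, hTE⟩ := distinguished_cocone_triangle (Limits.Sigma.map k)
  have H2 : ∀ n, ∃ c : Y n ⟶ E, f n ≫ c = Sigma.ι X n ≫ g := fun n => by
    obtain ⟨c, hc, -⟩ := complete_distinguished_triangle_morphism _ _ (hT n) hTE
      (Sigma.ι K n) (Sigma.ι X n)
      (show k n ≫ Sigma.ι X n = Sigma.ι K n ≫ Limits.Sigma.map k by simp)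
    exact ⟨c, hc⟩
  choose c hc using H2
  have hg : g = Limits.Sigma.map f ≫ Sigma.desc c := by
    apply Sigma.hom_ext
    intro n
    simp [hc]
  have hug : u ≫ g = 0 := by
    rw [hg, ← Category.assoc, hu, zero_comp]
  obtain ⟨z, hz⟩ := tri_co2 hTE u hug
  have hz' : u = z ≫ Limits.Sigma.map k := hz
  have hmem : Limits.Sigma.map k ≫ s ∈ I.carrier _ _ := by
    refine (hsum ℕ K W _).1 fun n => ?_
    apply hE.2
    intro P hP x
    have h0 : k n ≫ f n = 0 := comp_distTriang_mor_zero₁₂ _ (hT n)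
    have := hf n P hP (x ≫ k n) (by rw [Category.assoc, h0, comp_zero])
    simpa using this
  rw [hz', Category.assoc]
  exact hP _ _ (I.comp_mem_right _ _ hmem)

/-- One step of the cellular approximation tower. -/
lemma cell_step (I : CatIdeal C) (hE : EnoughI I) {X a : C} (f : a ⟶ X)
    (ha : a ∈ localisingClosure C {Q | IsProjI I Q}) (hf : LiftsI I f) :
    ∃ (a' : C) (f' : a' ⟶ X) (i : a ⟶ a'), a' ∈ localisingClosure C {Q | IsProjI I Q} ∧
      LiftsI I f' ∧ i ≫ f' = f ∧ KillsI I f i := by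
  obtain ⟨K, k, d, hT⟩ := distinguished_cocone_triangle₁ f
  obtain ⟨Q, q, hQ, hq⟩ := hE.1 K
  obtain ⟨a', i, d', hT'⟩ := distinguished_cocone_triangle (q ≫ k)
  have h0 : k ≫ f = 0 := comp_distTriang_mor_zero₁₂ _ hT
  have h1 : (q ≫ k) ≫ i = 0 := comp_distTriang_mor_zero₁₂ _ hT'
  obtain ⟨f', hf'⟩ := tri_yo2 hT' f
    (show (q ≫ k) ≫ f = 0 by rw [Category.assoc, h0, comp_zero])
  have hf'' : f = i ≫ f' := hf'
  refine ⟨a', f', i, ?_, ?_, hf''.symm, ?_⟩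
  · exact (isLocalising_closure _).2.2.1 _ hT' (fun T hT => hT.1 hQ) ha
  · intro P hP x
    obtain ⟨x', hx'⟩ := hf P hP x
    exact ⟨x' ≫ i, by rw [Category.assoc, ← hf'', hx']⟩
  · intro P hP x hx
    obtain ⟨z, hz⟩ := tri_co2 hT x hx
    obtain ⟨z', rfl⟩ := hq P hP z
    have hz' : x = (z' ≫ q) ≫ k := hz
    rw [hz', Category.assoc, Category.assoc, ← Category.assoc q, h1, comp_zero]

/-- Objects of the tower. -/
structure Cell (I : CatIdeal C) (X : C) where
  obj : C
  hom : obj ⟶ X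
  mem : obj ∈ localisingClosure C {Q | IsProjI I Q}
  lifts : LiftsI I hom

lemma exists_tower (I : CatIdeal C) (hE : EnoughI I) (X : C) :
    ∃ (a : ℕ → C) (f : ∀ n, a n ⟶ X) (i : ∀ n, a n ⟶ a (n + 1)),
      (∀ n, a n ∈ localisingClosure C {Q | IsProjI I Q}) ∧ (∀ n, LiftsI I (f n)) ∧
      (∀ n, i n ≫ f (n + 1) = f n) ∧ (∀ n, KillsI I (f n) (i n)) := by
  have H : ∀ p : Cell I X, ∃ (p' : Cell I X) (i : p.obj ⟶ p'.obj),
      i ≫ p'.hom = p.hom ∧ KillsI I p.hom i := fun p => by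
    obtain ⟨a', f', i, h1, h2, h3, h4⟩ := cell_step I hE p.hom p.mem p.lifts
    exact ⟨⟨a', f', h1, h2⟩, i, h3, h4⟩
  choose nxt i h1 h2 using H
  obtain ⟨Q, q, hQ, hq⟩ := hE.1 X
  let c : ℕ → Cell I X := fun n => Nat.rec ⟨Q, q, fun T hT => hT.1 hQ, hq⟩ (fun _ p => nxt p) n
  exact ⟨fun n => (c n).obj, fun n => (c n).hom, fun n => i (c n), fun n => (c n).mem,
    fun n => (c n).lifts, fun n => h1 (c n), fun n => h2 (c n)⟩

lemma exists_approx (I : CatIdeal C) (hE : EnoughI I)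
    (hshift : ∀ {X Y : C} (f : X ⟶ Y) (n : ℤ),
      f ∈ I.carrier X Y → (shiftFunctor C n).map f ∈ I.carrier (X⟦n⟧) (Y⟦n⟧))
    (hsum : ∀ (ι : Type) [Countable ι] (X : ι → C) (B : C) (f : (∐ X) ⟶ B),
      ((∀ i, Sigma.ι X i ≫ f ∈ I.carrier (X i) B) ↔ f ∈ I.carrier (∐ X) B)) (X : C) :
    ∃ (B : C) (f : B ⟶ X), B ∈ localisingClosure C {Q | IsProjI I Q} ∧ LiftsI I f ∧
      ∀ (P : C), IsProjI I P → ∀ x : P ⟶ B, x ≫ f = 0 → x = 0 := by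
  obtain ⟨a, f, i, hmem, hlift, hcomp, hkill⟩ := exists_tower I hE X
  let S : ∐ a ⟶ ∐ a := Sigma.desc fun n => i n ≫ Sigma.ι a (n + 1)
  let XX : ℕ → C := fun _ => X
  let inX : ℕ → (X ⟶ ∐ XX) := fun m => Sigma.ι XX m
  let SX : ∐ XX ⟶ ∐ XX := Sigma.desc fun n => Sigma.ι XX (n + 1)
  let r : ∐ XX ⟶ ∐ XX := Sigma.desc fun n => - ∑ m ∈ Finset.range n, inX m
  let nab : ∐ XX ⟶ X := Sigma.desc fun _ => 𝟙 X
  let φ : ∐ a ⟶ ∐ XX := Limits.Sigma.map f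
  have hιS : ∀ n, Sigma.ι a n ≫ S = i n ≫ Sigma.ι a (n + 1) := fun n => by simp [S]
  have hιSX : ∀ n, Sigma.ι XX n ≫ SX = Sigma.ι XX (n + 1) := fun n => by simp [SX]
  have hιr : ∀ n, Sigma.ι XX n ≫ r = - ∑ m ∈ Finset.range n, inX m :=
    fun n => by simp [r]
  have hιn : ∀ n, Sigma.ι XX n ≫ nab = 𝟙 X := fun n => by simp [nab]
  have hιφ : ∀ n, Sigma.ι a n ≫ φ = f n ≫ Sigma.ι XX n := fun n => by simp [φ, XX]
  have hS : S ≫ φ = φ ≫ SX := by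
    apply Sigma.hom_ext
    intro n
    rw [← Category.assoc, hιS, Category.assoc, hιφ, ← Category.assoc, hcomp,
      ← Category.assoc, hιφ, Category.assoc, hιSX]
  have hr1 : (𝟙 _ - SX) ≫ r = 𝟙 _ := by
    apply Sigma.hom_ext
    intro n
    rw [Preadditive.sub_comp, Preadditive.comp_sub, Category.id_comp, Category.comp_id,
      ← Category.assoc, hιSX, hιr, hιr, Finset.sum_range_succ]
    change _ = inX n
    abel
  have hinS : ∀ n, inX n ≫ SX = inX (n + 1) := hιSX
  have hr2 : r ≫ (𝟙 _ - SX) = 𝟙 _ - nab ≫ Sigma.ι XX 0 := by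
    apply Sigma.hom_ext
    intro n
    have h := Finset.sum_range_succ inX n
    rw [Finset.sum_range_succ'] at h
    have e1 : Sigma.ι XX n ≫ r ≫ (𝟙 _ - SX) =
        - ∑ m ∈ Finset.range n, inX m + ∑ m ∈ Finset.range n, inX (m + 1) := by
      rw [← Category.assoc, hιr, Preadditive.comp_sub, Category.comp_id, Preadditive.neg_comp,
        Preadditive.sum_comp, Finset.sum_congr rfl fun m _ => hinS m, sub_neg_eq_add]
    have e2 : Sigma.ι XX n ≫ (𝟙 _ - nab ≫ Sigma.ι XX 0) = inX n - inX 0 := by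
      rw [Preadditive.comp_sub, Category.comp_id, ← Category.assoc, hιn]
      congr 1
      exact Category.id_comp (inX 0)
    rw [e1, e2, eq_sub_of_add_eq h]
    abel
  have hφlift : LiftsI I φ := liftsI_sigma I hE hsum a XX f hlift
  have hφkill : KillsI I φ S := by
    apply killsI_sigma I hE hsum a XX f
    intro n P hP x hx
    rw [hιS, ← Category.assoc, hkill n P hP x hx, zero_comp]
  have hD : (𝟙 _ - S) ≫ φ = φ ≫ (𝟙 _ - SX) := by
    rw [Preadditive.sub_comp, Preadditive.comp_sub, hS, Category.id_comp, Category.comp_id]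
  have hmono : ∀ (P : C), IsProjI I P → ∀ y : P ⟶ ∐ a, y ≫ (𝟙 _ - S) = 0 → y = 0 := by
    intro P hP y hy
    have h1 : y ≫ φ = 0 := by
      have : (y ≫ φ) ≫ (𝟙 _ - SX) ≫ r = 0 := by
        rw [← Category.assoc, Category.assoc y, ← hD, ← Category.assoc, hy, zero_comp, zero_comp]
      rwa [hr1, Category.comp_id] at this
    have h2 := hφkill P hP y h1
    rwa [Preadditive.comp_sub, Category.comp_id, h2, sub_zero] at hy
  obtain ⟨B, j, δ, hT⟩ := distinguished_cocone_triangle (𝟙 _ - S)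
  have hDn : (𝟙 _ - SX) ≫ nab = 0 := by
    apply Sigma.hom_ext
    intro n
    rw [Preadditive.sub_comp, Preadditive.comp_sub, Category.id_comp, ← Category.assoc, hιSX,
      hιn, hιn, sub_self, comp_zero]
  obtain ⟨g, hg⟩ := tri_yo2 hT (φ ≫ nab)
    (show (𝟙 _ - S) ≫ φ ≫ nab = 0 by
      rw [← Category.assoc, hD, Category.assoc, hDn, comp_zero])
  have hg' : φ ≫ nab = j ≫ g := hg
  have hDj : (𝟙 _ - S) ≫ j = 0 := comp_distTriang_mor_zero₁₂ _ hT
  refine ⟨B, g, ?_, ?_, ?_⟩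
  · have hs := (isLocalising_closure {Q : C | IsProjI I Q}).2.2.2 ℕ a hmem
    exact (isLocalising_closure _).2.2.1 _ hT hs hs
  · intro P hP x
    obtain ⟨x', hx'⟩ := hlift 0 P hP x
    refine ⟨x' ≫ Sigma.ι a 0 ≫ j, ?_⟩
    rw [Category.assoc, Category.assoc, ← hg', ← Category.assoc (Sigma.ι a 0), hιφ,
      Category.assoc, hιn, Category.comp_id, hx']
  · intro P hP x hx
    have h31 : δ ≫ (𝟙 _ - S)⟦(1 : ℤ)⟧' = 0 := comp_distTriang_mor_zero₃₁ _ hT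
    have h1 : x ≫ δ = 0 := by
      apply mono_shift I hshift _ hmono P hP
      rw [Category.assoc, h31, comp_zero]
    obtain ⟨w, hw⟩ := tri_co3 hT x h1
    have hw' : x = w ≫ j := hw
    subst hw'
    have h2 : (w ≫ φ) ≫ nab = 0 := by
      rw [Category.assoc, hg', ← Category.assoc, hx]
    have h3 : ((w ≫ φ) ≫ r) ≫ (𝟙 _ - SX) = w ≫ φ := by
      rw [Category.assoc, hr2, Preadditive.comp_sub, Category.comp_id, ← Category.assoc _ nab,
        h2, zero_comp, sub_zero]
    obtain ⟨v, hv⟩ := hφlift P hP ((w ≫ φ) ≫ r)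
    have h4 : (w - v ≫ (𝟙 _ - S)) ≫ φ = 0 := by
      rw [Preadditive.sub_comp, Category.assoc, hD, ← Category.assoc v, hv, h3, sub_self]
    have h5 := hφkill P hP _ h4
    have h6 : (w - v ≫ (𝟙 _ - S)) ≫ (𝟙 _ - S) = w - v ≫ (𝟙 _ - S) := by
      rw [Preadditive.comp_sub, h5, Category.comp_id, sub_zero]
    have h7 : w = ((w - v ≫ (𝟙 _ - S)) + v) ≫ (𝟙 _ - S) := by
      rw [Preadditive.add_comp, h6, sub_add_cancel]
    rw [h7, Category.assoc, hDj, comp_zero]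

end Helpers

/-- For a homological ideal `𝔦` with enough projective objects, compatible with
countable direct sums, the pair `(⟨Proj_𝔦⟩, 𝒩_𝔦)` is complementary. -/
theorem proj_contractible_complementary
    (C : Type u) [Category.{v} C] [Preadditive C] [HasZeroObject C] [HasShift C ℤ]
    [∀ n : ℤ, (shiftFunctor C n).Additive] [Pretriangulated C]
    [HasCountableCoproducts C]
    (A : Type u') [Category.{v'} A] [Abelian A]
    (F : C ⥤ A) [F.IsHomological]
    (I : CatIdeal C)
    (hker : ∀ {X Y : C} (f : X ⟶ Y), f ∈ I.carrier X Y ↔ F.map f = 0)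
    (hshift : ∀ {X Y : C} (f : X ⟶ Y) (n : ℤ),
      f ∈ I.carrier X Y → (shiftFunctor C n).map f ∈ I.carrier (X⟦n⟧) (Y⟦n⟧))
    -- `𝔦` is compatible with countable direct sums:
    (hsum : ∀ (ι : Type) [Countable ι] (X : ι → C) (B : C) (f : (∐ X) ⟶ B),
      ((∀ i, Sigma.ι X i ≫ f ∈ I.carrier (X i) B) ↔ f ∈ I.carrier (∐ X) B))
    -- `𝔦` has enough projective objects:
    (henough : ∀ X : C, ∃ (Q : C) (q : Q ⟶ X), IsProjI I Q ∧ Epi (F.map q)) :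
    -- orthogonality:
    (∀ Q ∈ localisingClosure C {Q | IsProjI I Q}, ∀ Y : C,
      𝟙 Y ∈ I.carrier Y Y → ∀ (n : ℤ) (f : Q⟦n⟧ ⟶ Y), f = 0) ∧
    -- exact triangles `Ã → A → N → Ã[1]`:
    (∀ X : C, ∃ (Q Y : C) (f : Q ⟶ X) (g : X ⟶ Y) (h : Y ⟶ Q⟦(1 : ℤ)⟧),
      Triangle.mk f g h ∈ (distTriang C) ∧
      Q ∈ localisingClosure C {Q | IsProjI I Q} ∧
      𝟙 Y ∈ I.carrier Y Y) := by
  have hE : EnoughI I := by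
    refine ⟨fun X => ?_, fun X Y f hf => ?_⟩
    · obtain ⟨Q, q, hQ, hq⟩ := henough X
      obtain ⟨Z, g, h, hT⟩ := distinguished_cocone_triangle q
      refine ⟨Q, q, hQ, liftsI_of_cone I hT ?_⟩
      have h0 : q ≫ g = 0 := comp_distTriang_mor_zero₁₂ _ hT
      rw [hker, ← cancel_epi (F.map q), ← F.map_comp, h0, comp_zero]
      exact (hker _).1 (I.carrier _ _).zero_mem
    · obtain ⟨Q, q, hQ, hq⟩ := henough X
      rw [hker, ← cancel_epi (F.map q), ← F.map_comp, hf Q hQ q, comp_zero]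
      exact (hker _).1 (I.carrier _ _).zero_mem
  constructor
  · let T : Set C := {Q | ∀ Y : C, 𝟙 Y ∈ I.carrier Y Y → ∀ f : Q ⟶ Y, f = 0}
    have hTs : ∀ X ∈ T, ∀ n : ℤ, X⟦n⟧ ∈ T := by
      intro X hX n Y hY f
      apply eq_zero_of_unshift
      apply hX
      have := hshift _ (-n) hY
      rwa [CategoryTheory.Functor.map_id] at this
    have hTl : IsLocalising C T := by
      refine ⟨?_, hTs, ?_, ?_⟩
      · intro X X' e hX Y hY f
        rw [← cancel_epi e.hom, comp_zero]
        exact hX Y hY _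
      · intro T' hT' h1 h2 Y hY f
        obtain ⟨g, hg⟩ := Triangle.yoneda_exact₃ T' hT' f (h2 Y hY _)
        rw [hg, hTs _ h1 1 Y hY g, comp_zero]
      · intro ι _ X hX Y hY f
        apply Sigma.hom_ext
        intro i
        rw [comp_zero]
        exact hX i Y hY _
    intro Q hQ Y hY n f
    refine hTs Q (hQ T ⟨?_, hTl⟩) n Y hY f
    intro P hP Y hY f
    apply hP
    have := I.comp_mem_right f _ hY
    rwa [Category.comp_id] at this
  · intro X
    obtain ⟨B, f, hB, hl, hm⟩ := exists_approx I hE hshift hsum X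
    obtain ⟨N, g, h, hT⟩ := distinguished_cocone_triangle f
    refine ⟨B, N, f, g, h, hT, hB, ?_⟩
    apply hE.2
    intro P hP x
    have h31 : h ≫ f⟦(1 : ℤ)⟧' = 0 := comp_distTriang_mor_zero₃₁ _ hT
    have h12 : f ≫ g = 0 := comp_distTriang_mor_zero₁₂ _ hT
    have h1 : x ≫ h = 0 := by
      apply mono_shift I hshift _ hm P hP
      rw [Category.assoc, h31, comp_zero]
    obtain ⟨w, hw⟩ := tri_co3 hT x h1
    obtain ⟨w', rfl⟩ := hl P hP w
    have hw' : x = (w' ≫ f) ≫ g := hw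
    rw [Category.comp_id, hw', Category.assoc, h12, comp_zero]
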